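/- Fix integers M ≥ 1, N ≥ 1, reals ε > 0 and a < b, continuously differentiable functions f, F : ℝ → ℝ with F' = f, and suppose h ∈ V_{M,N} solves the implicit ESET scheme on [a,b]: ∫_a^b ∫₋₁¹ [∂_t h·w + ε ∂_x h·∂_x w + (1/ε) f(h)·w] dx dt = 0 for every w ∈ W_{M,N−1}. Then the discrete energy law holds: E[h(·,b)] − E[h(·,a)] = − ∫_a^b ∫₋₁¹ (∂_t h(x,t))² dx dt ≤ 0, where E[v] := ∫₋₁¹ ( (ε/2)(∂_x v(x))² + (1/ε) F(v(x)) ) dx. -/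

import Mathlib

open MeasureTheory intervalIntegral

/-- `h(x,t)` is a real polynomial function of degree at most `M` in `x` and
at most `N` in `t`. -/
def IsPolyMN (M N : ℕ) (h : ℝ → ℝ → ℝ) : Prop :=
  ∃ c : Fin (M + 1) → Fin (N + 1) → ℝ,
    ∀ x t : ℝ, h x t = ∑ i : Fin (M + 1), ∑ j : Fin (N + 1),
      c i j * x ^ (i : ℕ) * t ^ (j : ℕ)

/-- The trial space `V_{M,N}`: polynomial functions of degree at most `M` in
`x` and at most `N` in `t`, vanishing at `x = ±1`. -/
def MemV (M N : ℕ) (h : ℝ → ℝ → ℝ) : Prop :=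
  IsPolyMN M N h ∧ ∀ t : ℝ, h (-1) t = 0 ∧ h 1 t = 0

/-- The test space `W_{M,N−1}`: polynomial functions of degree at most `M` in
`x` and at most `N−1` in `t`, vanishing at `x = ±1`. -/
def MemW (M N : ℕ) (w : ℝ → ℝ → ℝ) : Prop :=
  IsPolyMN M (N - 1) w ∧ ∀ t : ℝ, w (-1) t = 0 ∧ w 1 t = 0

/-- Partial derivative in time. -/
noncomputable def ptd (h : ℝ → ℝ → ℝ) (x t : ℝ) : ℝ := deriv (fun s => h x s) t

/-- Partial derivative in space. -/
noncomputable def pxd (h : ℝ → ℝ → ℝ) (x t : ℝ) : ℝ := deriv (fun y => h y t) x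

namespace IsPolyMN

variable {M N : ℕ} {h : ℝ → ℝ → ℝ}

theorem continuous_uncurry (hh : IsPolyMN M N h) :
    Continuous (fun p : ℝ × ℝ => h p.1 p.2) := by
  obtain ⟨c, hc⟩ := hh
  simp only [hc]
  fun_prop

theorem differentiable_right (hh : IsPolyMN M N h) (x : ℝ) :
    Differentiable ℝ (fun t => h x t) := by
  obtain ⟨c, hc⟩ := hh
  simp only [hc]
  fun_prop

theorem pxd_eq {c : Fin (M + 1) → Fin (N + 1) → ℝ}
    (hc : ∀ x t : ℝ, h x t = ∑ i : Fin (M + 1), ∑ j : Fin (N + 1),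
      c i j * x ^ (i : ℕ) * t ^ (j : ℕ)) (x t : ℝ) :
    pxd h x t = ∑ i : Fin (M + 1), ∑ j : Fin (N + 1),
      c i j * ((i : ℕ) * x ^ ((i : ℕ) - 1)) * t ^ (j : ℕ) := by
  simp only [pxd, hc]
  refine HasDerivAt.deriv (HasDerivAt.fun_sum fun i _ => HasDerivAt.fun_sum fun j _ => ?_)
  exact ((hasDerivAt_pow _ x).const_mul _).mul_const _

theorem ptd_eq {c : Fin (M + 1) → Fin (N + 1) → ℝ}
    (hc : ∀ x t : ℝ, h x t = ∑ i : Fin (M + 1), ∑ j : Fin (N + 1),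
      c i j * x ^ (i : ℕ) * t ^ (j : ℕ)) (x t : ℝ) :
    ptd h x t = ∑ i : Fin (M + 1), ∑ j : Fin (N + 1),
      c i j * x ^ (i : ℕ) * ((j : ℕ) * t ^ ((j : ℕ) - 1)) := by
  simp only [ptd, hc]
  refine HasDerivAt.deriv (HasDerivAt.fun_sum fun i _ => HasDerivAt.fun_sum fun j _ => ?_)
  exact (hasDerivAt_pow _ t).const_mul _

/-- The time derivative lowers the degree in `t` by one. -/
theorem ptd_pred (hN : 1 ≤ N) (hh : IsPolyMN M N h) : IsPolyMN M (N - 1) (ptd h) := by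
  obtain ⟨n, rfl⟩ := Nat.exists_eq_add_of_le' hN
  obtain ⟨c, hc⟩ := hh
  refine ⟨fun i (j : Fin (n + 1)) => c i j.succ * ((j : ℕ) + 1), fun x t => ?_⟩
  rw [ptd_eq hc]
  refine Finset.sum_congr rfl fun i _ => ?_
  rw [Fin.sum_univ_succ]
  simp only [Fin.val_zero, Nat.cast_zero, zero_mul, mul_zero, zero_add, Fin.val_succ,
    Nat.cast_add, Nat.cast_one, Nat.add_sub_cancel]
  refine Finset.sum_congr rfl fun j _ => ?_
  ring

theorem continuous_pxd (hh : IsPolyMN M N h) :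
    Continuous (fun p : ℝ × ℝ => pxd h p.1 p.2) := by
  obtain ⟨c, hc⟩ := hh
  simp only [pxd_eq hc]
  fun_prop

/-- The mixed partial derivatives of a polynomial function agree. -/
theorem hasDerivAt_pxd (hh : IsPolyMN M N h) (x t : ℝ) :
    HasDerivAt (fun s => pxd h x s) (pxd (ptd h) x t) t := by
  obtain ⟨c, hc⟩ := hh
  have hmixed : pxd (ptd h) x t = ∑ i : Fin (M + 1), ∑ j : Fin (N + 1),
      c i j * ((i : ℕ) * x ^ ((i : ℕ) - 1)) * ((j : ℕ) * t ^ ((j : ℕ) - 1)) := by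
    rw [pxd]
    simp only [ptd_eq hc]
    refine HasDerivAt.deriv (HasDerivAt.fun_sum fun i _ => HasDerivAt.fun_sum fun j _ => ?_)
    exact ((hasDerivAt_pow _ x).const_mul _).mul_const _
  rw [hmixed]
  simp only [pxd_eq hc]
  refine HasDerivAt.fun_sum fun i _ => HasDerivAt.fun_sum fun j _ => ?_
  exact (hasDerivAt_pow _ t).const_mul _

end IsPolyMN

theorem MemV.memW_ptd {M N : ℕ} {h : ℝ → ℝ → ℝ} (hN : 1 ≤ N) (hh : MemV M N h) :
    MemW M N (ptd h) := by
  refine ⟨hh.1.ptd_pred hN, fun t => ?_⟩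
  simp [ptd, hh.2]

/-- Integrating the time derivative of a density over space and time gives the increment of the
spatial integral of the density. -/
theorem integral_sub_integral_eq_integral_integral_deriv {e g : ℝ → ℝ → ℝ} {a b c d : ℝ}
    (he : Continuous (fun p : ℝ × ℝ => e p.1 p.2)) (hg : Continuous (fun p : ℝ × ℝ => g p.1 p.2))
    (hderiv : ∀ x t, HasDerivAt (fun s => e x s) (g x t) t) :
    (∫ x in c..d, e x b) - (∫ x in c..d, e x a) = ∫ t in a..b, ∫ x in c..d, g x t := by
  have hslice : ∀ t, Continuous fun x => e x t := fun t =>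
    he.comp (continuous_id.prodMk continuous_const)
  have hint : IntegrableOn (Function.uncurry fun t x => g x t) (Set.uIoc a b ×ˢ Set.uIoc c d) :=
    ((hg.comp continuous_swap).continuousOn.integrableOn_compact
      (isCompact_uIcc.prod isCompact_uIcc)).mono_set
      (Set.prod_mono Set.uIoc_subset_uIcc Set.uIoc_subset_uIcc)
  rw [← integral_sub ((hslice b).intervalIntegrable _ _) ((hslice a).intervalIntegrable _ _),
    intervalIntegral_intervalIntegral_swap hint]
  refine integral_congr fun x _ => ?_
  exact (integral_eq_sub_of_hasDerivAt (fun t _ => hderiv x t)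
    ((hg.comp (continuous_const.prodMk continuous_id)).intervalIntegrable _ _)).symm

/-- The discrete energy dissipation law of Theorem 2.1: a solution of the
implicit ESET scheme on `[a,b]` satisfies
`E[h(·,b)] − E[h(·,a)] = −∫_a^b ∫₋₁¹ (∂_t h)² dx dt ≤ 0`,
where `E[v] = ∫₋₁¹ ((ε/2)(∂ₓv)² + (1/ε) F(v)) dx`. -/
theorem eset_implicit_energy_law (M N : ℕ) (hM : 1 ≤ M) (hN : 1 ≤ N)
    (ε : ℝ) (hε : 0 < ε) (a b : ℝ) (hab : a < b)
    (f F : ℝ → ℝ) (hf : ContDiff ℝ 1 f) (hF : ∀ y : ℝ, HasDerivAt F (f y) y)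
    (h : ℝ → ℝ → ℝ) (hmem : MemV M N h)
    (hscheme : ∀ w : ℝ → ℝ → ℝ, MemW M N w →
      (∫ t in a..b, ∫ x in (-1 : ℝ)..1,
        (ptd h x t * w x t + ε * pxd h x t * pxd w x t +
          (1 / ε) * f (h x t) * w x t)) = 0) :
    (∫ x in (-1 : ℝ)..1, (ε / 2 * (pxd h x b) ^ 2 + (1 / ε) * F (h x b))) -
      (∫ x in (-1 : ℝ)..1, (ε / 2 * (pxd h x a) ^ 2 + (1 / ε) * F (h x a)))
      = - ∫ t in a..b, ∫ x in (-1 : ℝ)..1, (ptd h x t) ^ 2 ∧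
    (∫ x in (-1 : ℝ)..1, (ε / 2 * (pxd h x b) ^ 2 + (1 / ε) * F (h x b))) -
      (∫ x in (-1 : ℝ)..1, (ε / 2 * (pxd h x a) ^ 2 + (1 / ε) * F (h x a))) ≤ 0 := by
  have hpoly := hmem.1
  have hw := hmem.memW_ptd hN
  have hh := hpoly.continuous_uncurry
  have hx := hpoly.continuous_pxd
  have ht := hw.1.continuous_uncurry
  have hxt := hw.1.continuous_pxd
  have hfc := hf.continuous
  have hFc : Continuous F := continuous_iff_continuousAt.2 fun y => (hF y).continuousAt
  let g : ℝ → ℝ → ℝ := fun x t =>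
    ε * pxd h x t * pxd (ptd h) x t + (1 / ε) * f (h x t) * ptd h x t
  have hg : Continuous fun p : ℝ × ℝ => g p.1 p.2 := by
    have := hfc.comp hh
    simp only [g]
    fun_prop
  have he : Continuous fun p : ℝ × ℝ =>
      ε / 2 * (pxd h p.1 p.2) ^ 2 + (1 / ε) * F (h p.1 p.2) := by
    have := hFc.comp hh
    fun_prop
  have hderiv : ∀ x t, HasDerivAt
      (fun s => ε / 2 * (pxd h x s) ^ 2 + (1 / ε) * F (h x s)) (g x t) t := by
    intro x t
    have hdt : HasDerivAt (fun s => h x s) (ptd h x t) t :=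
      (hpoly.differentiable_right x t).hasDerivAt
    refine ((((hpoly.hasDerivAt_pxd x t).fun_pow 2).const_mul (ε / 2)).fun_add
      (((hF (h x t)).comp t hdt).const_mul (1 / ε))).congr_deriv ?_
    simp only [g]
    push_cast
    ring
  have hincr := integral_sub_integral_eq_integral_integral_deriv (a := a) (b := b)
    (c := -1) (d := 1) he hg hderiv
  have hsq : Continuous fun p : ℝ × ℝ => (ptd h p.1 p.2) ^ 2 := ht.pow 2
  have hslice : ∀ {k : ℝ → ℝ → ℝ}, Continuous (fun p : ℝ × ℝ => k p.1 p.2) →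
      ∀ t, IntervalIntegrable (fun x => k x t) volume (-1) 1 := fun hk t =>
    (hk.comp (continuous_id.prodMk continuous_const)).intervalIntegrable _ _
  have hspace : ∀ {k : ℝ → ℝ → ℝ}, Continuous (fun p : ℝ × ℝ => k p.1 p.2) →
      IntervalIntegrable (fun t => ∫ x in (-1 : ℝ)..1, k x t) volume a b := fun {k} hk =>
    (continuous_parametric_intervalIntegral_of_continuous' (f := fun t x => k x t)
      (hk.comp continuous_swap) _ _).intervalIntegrable _ _
  have hzero : (∫ t in a..b, ∫ x in (-1 : ℝ)..1, (ptd h x t) ^ 2) +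
      (∫ t in a..b, ∫ x in (-1 : ℝ)..1, g x t) = 0 := by
    rw [← integral_add (hspace (k := fun x t => (ptd h x t) ^ 2) hsq) (hspace hg),
      ← hscheme _ hw]
    refine integral_congr fun t _ => ?_
    rw [← integral_add (hslice (k := fun x t => (ptd h x t) ^ 2) hsq t) (hslice hg t)]
    refine integral_congr fun x _ => ?_
    simp only [g]
    ring
  have hnonneg : 0 ≤ ∫ t in a..b, ∫ x in (-1 : ℝ)..1, (ptd h x t) ^ 2 :=
    integral_nonneg hab.le fun t _ => integral_nonneg (by norm_num) fun x _ => sq_nonneg _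
  constructor <;> linarith
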